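/- With A = π((e₁*⊗e₂*)⊗(e₁⊗e₂)), D = π((e₂*⊗e₁*)⊗(e₂⊗e₁)), B = π((e₂*⊗e₁*)⊗(e₁⊗e₂)), and C = π((e₁*⊗e₂*)⊗(e₂⊗e₁)), the following relations hold: B = C and A − D = (q − q⁻¹)·B. (These are the quantum matrix algebra relations bc = cb and ad − da = (q−q⁻¹)bc of O_q(M₂), derived here from the Peter–Weyl/Schur–Weyl projection.) -/

import Mathlib

/-!
Write `X = e₂*⊗e₁*`, `Y = e₁*⊗e₂*`, `x = e₂⊗e₁`, `y = e₁⊗e₂`. Inverting the change of basis gives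
`X = s* + t*`, `Y = q s* - q⁻¹ t*`, `(q + q⁻¹) x = q⁻¹ s + q t`, `(q + q⁻¹) y = s - t`.
Expanding, the components along `s*⊗s` and `t*⊗t` cancel in both relations:
`X⊗y - Y⊗x = -q (s*⊗t) + q⁻¹ (t*⊗s)` and
`Y⊗y - X⊗x - (q - q⁻¹) X⊗y = -(s*⊗t) - t*⊗s`.
Both right-hand sides are killed by `π`.
-/

/- STATEMENT 10: With A = π((e₁*⊗e₂*)⊗(e₁⊗e₂)), D = π((e₂*⊗e₁*)⊗(e₂⊗e₁)),
   B = π((e₂*⊗e₁*)⊗(e₁⊗e₂)), C = π((e₁*⊗e₂*)⊗(e₂⊗e₁)) (π the projection of M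
   onto the span of s*⊗s and t*⊗t killing s*⊗t and t*⊗s, formalized as any
   linear map on the ambient coordinate space satisfying the four defining
   equations), the quantum matrix algebra relations hold:
   B = C  and  A − D = (q − q⁻¹)·B.
   These are the relations bc = cb and ad − da = (q−q⁻¹)bc of O_q(M₂).
   F²⊗F², (F²)*⊗(F²)* and ((F²)*⊗(F²)*)⊗(F²⊗F²) are modeled as coordinate
   vectors as in the context. -/

noncomputable section

variable {F : Type*} [Field F]

/-- Tensor of two vectors of `F²` (or of two dual vectors), in coordinates. -/
def tens (u v : Fin 2 → F) : Fin 2 × Fin 2 → F := fun p => u p.1 * v p.2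

/-- Tensor of an element of `(F²)*⊗(F²)*` with an element of `F²⊗F²`, in
coordinates. -/
def btens (φ u : Fin 2 × Fin 2 → F) : (Fin 2 × Fin 2) × (Fin 2 × Fin 2) → F :=
  fun p => φ p.1 * u p.2

/-- `e₁` (also `e₁*`). -/
def e1 : Fin 2 → F := Pi.single 0 1
/-- `e₂` (also `e₂*`). -/
def e2 : Fin 2 → F := Pi.single 1 1

/-- `s = e₂⊗e₁ + q·e₁⊗e₂`. -/
def svec (q : F) : Fin 2 × Fin 2 → F := tens e2 e1 + q • tens e1 e2
/-- `t = e₂⊗e₁ − q⁻¹·e₁⊗e₂`. -/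
def tvec (q : F) : Fin 2 × Fin 2 → F := tens e2 e1 - q⁻¹ • tens e1 e2
/-- `s* = (q+q⁻¹)⁻¹(q⁻¹·e₂*⊗e₁* + e₁*⊗e₂*)`. -/
def svecStar (q : F) : Fin 2 × Fin 2 → F :=
  (q + q⁻¹)⁻¹ • (q⁻¹ • tens e2 e1 + tens e1 e2)
/-- `t* = (q+q⁻¹)⁻¹(q·e₂*⊗e₁* − e₁*⊗e₂*)`. -/
def tvecStar (q : F) : Fin 2 × Fin 2 → F :=
  (q + q⁻¹)⁻¹ • (q • tens e2 e1 - tens e1 e2)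

/-- The subspace `M` spanned by `s*⊗s, s*⊗t, t*⊗s, t*⊗t`. -/
def Msub (q : F) : Submodule F ((Fin 2 × Fin 2) × (Fin 2 × Fin 2) → F) :=
  Submodule.span F
    {btens (svecStar q) (svec q), btens (svecStar q) (tvec q),
      btens (tvecStar q) (svec q), btens (tvecStar q) (tvec q)}

/-- `X⊗y - Y⊗x` lies in the span of the mixed terms `s*⊗t` and `t*⊗s`. -/
lemma btens_sub_eq_mixed (q : F) (hq : q ≠ 0) (hk : q ^ 2 + 1 ≠ 0) :
    btens (tens e2 e1) (tens e1 e2) - btens (tens e1 e2) (tens e2 e1)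
      = (-q) • btens (svecStar q) (tvec q) + q⁻¹ • btens (tvecStar q) (svec q) := by
  funext p
  simp only [btens, svec, tvec, svecStar, tvecStar, Pi.add_apply, Pi.sub_apply, Pi.smul_apply,
    smul_eq_mul]
  generalize (tens e2 e1 : _ → F) p.1 = X, (tens e1 e2 : _ → F) p.1 = Y,
    (tens e2 e1 : _ → F) p.2 = x, (tens e1 e2 : _ → F) p.2 = y
  have hinv : (q + q⁻¹)⁻¹ = q / (q ^ 2 + 1) := by
    rw [← inv_div]; congr 1; field_simp
  rw [hinv]
  field_simp
  ring

/-- `Y⊗y - X⊗x - (q - q⁻¹) X⊗y` lies in the span of the mixed terms `s*⊗t` and `t*⊗s`. -/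
lemma btens_diag_sub_eq_mixed (q : F) (hq : q ≠ 0) (hk : q ^ 2 + 1 ≠ 0) :
    btens (tens e1 e2) (tens e1 e2) - btens (tens e2 e1) (tens e2 e1)
        - (q - q⁻¹) • btens (tens e2 e1) (tens e1 e2)
      = -btens (svecStar q) (tvec q) - btens (tvecStar q) (svec q) := by
  funext p
  simp only [btens, svec, tvec, svecStar, tvecStar, Pi.add_apply, Pi.sub_apply, Pi.smul_apply,
    Pi.neg_apply, smul_eq_mul]
  generalize (tens e2 e1 : _ → F) p.1 = X, (tens e1 e2 : _ → F) p.1 = Y,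
    (tens e2 e1 : _ → F) p.2 = x, (tens e1 e2 : _ → F) p.2 = y
  have hinv : (q + q⁻¹)⁻¹ = q / (q ^ 2 + 1) := by
    rw [← inv_div]; congr 1; field_simp
  rw [hinv]
  field_simp
  ring

theorem stmt10 (q : F) (hq : q ≠ 0) (hq2 : q ^ 2 ≠ -1)
    (π : ((Fin 2 × Fin 2) × (Fin 2 × Fin 2) → F) →ₗ[F]
      ((Fin 2 × Fin 2) × (Fin 2 × Fin 2) → F))
    (hss : π (btens (svecStar q) (svec q)) = btens (svecStar q) (svec q))
    (htt : π (btens (tvecStar q) (tvec q)) = btens (tvecStar q) (tvec q))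
    (hst : π (btens (svecStar q) (tvec q)) = 0)
    (hts : π (btens (tvecStar q) (svec q)) = 0) :
    -- B = C :
    π (btens (tens e2 e1) (tens e1 e2)) = π (btens (tens e1 e2) (tens e2 e1))
    -- A − D = (q − q⁻¹)·B :
    ∧ π (btens (tens e1 e2) (tens e1 e2)) - π (btens (tens e2 e1) (tens e2 e1))
        = (q - q⁻¹) • π (btens (tens e2 e1) (tens e1 e2)) := by
  have hk : q ^ 2 + 1 ≠ 0 := fun h => hq2 (eq_neg_of_add_eq_zero_left h)
  constructor
  · rw [← sub_eq_zero, ← map_sub, btens_sub_eq_mixed q hq hk]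
    simp [hst, hts]
  · rw [← sub_eq_zero, ← map_smul, ← map_sub, ← map_sub, btens_diag_sub_eq_mixed q hq hk]
    simp [hst, hts]

end
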